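/- Let $d\ge2$ and let $\psi$ be a Schwartz function on $\mathbb{R}^d$ whose Fourier transform $\widehat\psi(\xi)=u(|\xi|)$ satisfies $|u(\rho)|\le\rho^{10d}$ for $0<\rho\le1$ and $|u(\rho)|\le C_N\rho^{-N}$ for $\rho\ge1$ (all $N$). Let $1\le p\le 2$ and let $F:[2^j,2^{j+1}]\times\mathbb{R}^d\to\mathbb{C}$ with $F(r,\cdot)$ radial in no special way. Then for each fixed $x$, $\int_0^\infty |u(\rho)|^2\rho^{\frac{2d}{p}-d-1}\Big|\int_{2^j}^{2^{j+1}}r^{d-1}\mathcal{J}(r\rho)F(r,x)\,dr\Big|^2 d\rho \le C\int_{2^j}^{2^{j+1}}|F(r,x)|^2 r^{d-1}\,dr$, with $C$ independent of $j$ and $x$, where $\mathcal{J}(s)=c(d)s^{-(d-2)/2}J_{(d-2)/2}(s)$. -/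

import Mathlib

open MeasureTheory ENNReal
open scoped RealInnerProductSpace

/-!
Let `n` be the dimension and `Tf(ρ) = ∫ 𝒥(rρ) f(r) r ^ (n - 1) dr`. In polar coordinates, the
Fourier transform of `x ↦ f ‖x‖` at `ξ` is `Tf(2π ‖ξ‖)`. Plancherel's theorem for this radial
function, after cancelling the area of the sphere, therefore says that `T` is `(2π) ^ (n / 2)` times
an isometry of `L²(r ^ (n - 1) dr)`. The vanishing of `u` at `0` and its boundedness at `∞` give
`‖u ρ‖ ≤ K ρ ^ (n - n / p)`, so `‖u ρ‖² ρ ^ (2 * n / p - n - 1) ≤ K² ρ ^ (n - 1)`, and the estimate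
follows by applying `T` to the restriction of `F` to the given interval. That restriction may be
assumed to be in `L²`, and it is then integrable because the interval has finite measure.
-/

section Plancherel

open scoped FourierTransform ContDiff

variable {V H : Type*} [NormedAddCommGroup V] [InnerProductSpace ℝ V] [FiniteDimensional ℝ V]
  [MeasurableSpace V] [BorelSpace V] [NormedAddCommGroup H] [InnerProductSpace ℂ H]

theorem continuous_fourier_of_integrable {f : V → H} (hf : Integrable f) : Continuous (𝓕 f) :=
  VectorFourier.fourierIntegral_continuous Real.continuous_fourierChar (innerSL ℝ).continuous₂ hf

theorem integral_fourier_smul_eq [CompleteSpace H] {φ : V → ℂ} {f : V → H} (hφ : Integrable φ)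
    (hf : Integrable f) : ∫ ξ, 𝓕 φ ξ • f ξ = ∫ x, φ x • 𝓕 f x := by
  have hflip := VectorFourier.integral_fourierIntegral_smul_eq_flip (L := innerₗ V)
    Real.continuous_fourierChar continuous_inner hφ hf
  rwa [flip_innerₗ] at hflip

theorem fourier_toLp_ae_eq [CompleteSpace H] {f : V → H} (hf : Integrable f) (hf2 : MemLp f 2) :
    (𝓕 (hf2.toLp f) : Lp H 2 (volume : Measure V)) =ᵐ[volume] 𝓕 f := by
  refine ae_eq_of_integral_contDiff_smul_eq ((Lp.memLp _).locallyIntegrable (by norm_num))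
    (continuous_fourier_of_integrable hf).locallyIntegrable fun g hg hgc ↦ ?_
  have hgc' : HasCompactSupport fun x ↦ (g x : ℂ) :=
    hgc.comp_left (g := ((↑) : ℝ → ℂ)) Complex.ofReal_zero
  let φ : SchwartzMap V ℂ := hgc'.toSchwartzMap (Complex.ofRealCLM.contDiff.comp hg)
  have hφ (x : V) (v : H) : φ x • v = g x • v := Complex.coe_smul (g x) v
  have hpairing := congrArg (fun T ↦ T φ) (Lp.fourier_toTemperedDistribution_eq hf2.toLp)
  simp only [TemperedDistribution.fourier_apply, Lp.toTemperedDistribution_apply] at hpairing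
  calc ∫ x, g x • (𝓕 (hf2.toLp f) : Lp H 2 (volume : Measure V)) x
      = ∫ x, φ x • (𝓕 (hf2.toLp f) : Lp H 2 (volume : Measure V)) x := by simp only [hφ]
    _ = ∫ x, (𝓕 (φ : V → ℂ)) x • f x := by
      rw [← hpairing, SchwartzMap.fourier_coe]
      refine integral_congr_ae ?_
      filter_upwards [hf2.coeFn_toLp] with x hx
      rw [hx]
    _ = ∫ x, φ x • 𝓕 f x := integral_fourier_smul_eq φ.integrable hf
    _ = ∫ x, g x • 𝓕 f x := by simp only [hφ]

theorem eLpNorm_two_sq_eq_lintegral {α E : Type*} [MeasurableSpace α] [NormedAddCommGroup E]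
    (f : α → E) (μ : Measure α) : eLpNorm f 2 μ ^ 2 = ∫⁻ x, ‖f x‖ₑ ^ 2 ∂μ := by
  simpa using eLpNorm_nnreal_pow_eq_lintegral (f := f) (μ := μ) two_ne_zero

theorem lintegral_enorm_fourier_sq [CompleteSpace H] {f : V → H} (hf : Integrable f)
    (hf2 : MemLp f 2) : ∫⁻ ξ, ‖𝓕 f ξ‖ₑ ^ 2 = ∫⁻ x, ‖f x‖ₑ ^ 2 := by
  have hnorm : eLpNorm (𝓕 f) 2 = eLpNorm f 2 := by
    rw [← eLpNorm_congr_ae (fourier_toLp_ae_eq hf hf2), ← eLpNorm_congr_ae hf2.coeFn_toLp,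
      ← Lp.enorm_def, ← Lp.enorm_def, ← ofReal_norm, ← ofReal_norm, Lp.norm_fourier_eq]
  simp only [← eLpNorm_two_sq_eq_lintegral, hnorm]

theorem fourier_comp_norm_eq_of_norm_eq (f : ℝ → H) {ξ η : V} (hξη : ‖ξ‖ = ‖η‖) :
    𝓕 (fun x : V ↦ f ‖x‖) ξ = 𝓕 (fun x : V ↦ f ‖x‖) η := by
  have hrefl := Real.fourier_comp_linearIsometry ((ℝ ∙ (ξ - η))ᗮ.reflection)
    (fun x : V ↦ f ‖x‖) ξ
  simpa only [Submodule.reflection_sub hξη, Function.comp_def, LinearIsometryEquiv.norm_map]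
    using hrefl

end Plancherel

section Polar

open Metric Set Module

/-- The measure `r ^ (n - 1) dr` on `(0, ∞)`, the radial part of Lebesgue measure in dimension
`n ≥ 1`. It is a measure on `ℝ` rather than on the subtype `Set.Ioi 0`, so that radial profiles are
functions on `ℝ`. -/
noncomputable def radialMeasure (n : ℕ) : Measure ℝ :=
  (volume.restrict (Ioi 0)).withDensity fun r ↦ ENNReal.ofReal (r ^ (n - 1))

instance (n : ℕ) : IsLocallyFiniteMeasure (radialMeasure n) :=
  IsLocallyFiniteMeasure.withDensity_ofReal (by fun_prop)

theorem ae_radialMeasure_pos (n : ℕ) : ∀ᵐ r ∂radialMeasure n, 0 < r :=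
  (withDensity_absolutelyContinuous _ _).ae_le (ae_restrict_mem measurableSet_Ioi)

theorem restrict_radialMeasure {S : Set ℝ} (hS : MeasurableSet S) (hS0 : S ⊆ Ioi 0) (n : ℕ) :
    (radialMeasure n).restrict S =
      (volume.restrict S).withDensity fun r ↦ ENNReal.ofReal (r ^ (n - 1)) := by
  rw [radialMeasure, restrict_withDensity hS, Measure.restrict_restrict hS,
    inter_eq_left.2 hS0]

theorem setLIntegral_radialMeasure {S : Set ℝ} (hS : MeasurableSet S) (hS0 : S ⊆ Ioi 0) (n : ℕ)
    (f : ℝ → ℝ≥0∞) :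
    ∫⁻ r in S, f r ∂radialMeasure n = ∫⁻ r in S, f r * ENNReal.ofReal (r ^ (n - 1)) := by
  rw [restrict_radialMeasure hS hS0, lintegral_withDensity_eq_lintegral_mul_non_measurable _
    (by fun_prop) (.of_forall fun _ ↦ ofReal_lt_top)]
  simp only [Pi.mul_apply, mul_comm]

theorem lintegral_radialMeasure (n : ℕ) (f : ℝ → ℝ≥0∞) :
    ∫⁻ r, f r ∂radialMeasure n = ∫⁻ r in Ioi 0, f r * ENNReal.ofReal (r ^ (n - 1)) := by
  have hIoi : (radialMeasure n).restrict (Ioi 0) = radialMeasure n :=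
    Measure.restrict_eq_self_of_ae_mem (ae_radialMeasure_pos n)
  rw [← setLIntegral_radialMeasure measurableSet_Ioi Subset.rfl, hIoi]

theorem setIntegral_radialMeasure {E : Type*} [NormedAddCommGroup E] [NormedSpace ℝ E]
    {S : Set ℝ} (hS : MeasurableSet S) (hS0 : S ⊆ Ioi 0) (n : ℕ) (f : ℝ → E) :
    ∫ r in S, f r ∂radialMeasure n = ∫ r in S, r ^ (n - 1) • f r := by
  rw [restrict_radialMeasure hS hS0, integral_withDensity_eq_integral_toReal_smul (by fun_prop)
    (.of_forall fun _ ↦ ofReal_lt_top)]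
  refine setIntegral_congr_fun hS fun r hr ↦ ?_
  rw [toReal_ofReal (pow_nonneg (hS0 hr).out.le _)]

theorem map_val_volumeIoiPow (n : ℕ) :
    (Measure.volumeIoiPow (n - 1)).map Subtype.val = radialMeasure n := by
  ext s hs
  rw [Measure.map_apply measurable_subtype_coe hs, Measure.volumeIoiPow,
    withDensity_apply _ (measurable_subtype_coe hs),
    setLIntegral_subtype measurableSet_Ioi _ fun r ↦ ENNReal.ofReal (r ^ (n - 1)),
    Subtype.image_preimage_coe, inter_comm, radialMeasure, withDensity_apply _ hs,
    Measure.restrict_restrict hs]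

variable {E : Type*} [NormedAddCommGroup E] [NormedSpace ℝ E] [MeasurableSpace E]
  [FiniteDimensional ℝ E] [BorelSpace E] (μ : Measure E) [μ.IsAddHaarMeasure]

theorem lintegral_comp_inv_smul {c : ℝ} (hc : 0 < c) {g : E → ℝ≥0∞} (hg : Measurable g) :
    ∫⁻ x, g (c⁻¹ • x) ∂μ = ENNReal.ofReal (c ^ finrank ℝ E) * ∫⁻ x, g x ∂μ := by
  rw [← lintegral_map hg (measurable_const_smul _), Measure.map_addHaar_smul _ (inv_ne_zero hc.ne'),
    lintegral_smul_measure, inv_pow, inv_inv, abs_of_pos (by positivity), smul_eq_mul]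

variable [Nontrivial E]

theorem map_norm_addHaar : μ.map norm = μ.toSphere univ • radialMeasure (finrank ℝ E) := by
  have hpolar := μ.measurePreserving_homeomorphUnitSphereProd
  calc μ.map norm
      = ((μ.comap Subtype.val).map (Subtype.val : ({0}ᶜ : Set E) → E)).map norm := by
        rw [map_comap_subtype_coe (measurableSet_singleton _).compl, restrict_compl_singleton]
    _ = (μ.comap (↑)).map (Subtype.val ∘ Prod.snd ∘ homeomorphUnitSphereProd E) := by
        rw [Measure.map_map measurable_norm measurable_subtype_coe]
        congr with x
        exact (homeomorphUnitSphereProd_apply_snd_coe E x).symm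
    _ = ((μ.toSphere.prod (.volumeIoiPow (finrank ℝ E - 1))).map Prod.snd).map Subtype.val := by
        rw [← hpolar.map_eq, Measure.map_map measurable_snd hpolar.measurable,
          Measure.map_map measurable_subtype_coe (measurable_snd.comp hpolar.measurable)]
    _ = μ.toSphere univ • radialMeasure (finrank ℝ E) := by
        rw [Measure.map_snd_prod, Measure.map_smul, map_val_volumeIoiPow]

theorem lintegral_comp_norm {f : ℝ → ℝ≥0∞} (hf : AEMeasurable f (radialMeasure (finrank ℝ E))) :
    ∫⁻ x, f ‖x‖ ∂μ = μ.toSphere univ * ∫⁻ r, f r ∂radialMeasure (finrank ℝ E) := by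
  rw [← lintegral_map' (map_norm_addHaar μ ▸ hf.smul_measure _) measurable_norm.aemeasurable,
    map_norm_addHaar, lintegral_smul_measure, smul_eq_mul]

variable {G : Type*} [NormedAddCommGroup G]

theorem memLp_comp_norm {q : ℝ≥0∞} {f : ℝ → G} (hf : MemLp f q (radialMeasure (finrank ℝ E))) :
    MemLp (fun x ↦ f ‖x‖) q μ :=
  (map_norm_addHaar μ ▸ hf.smul_measure (measure_ne_top _ _)).comp_of_map
    measurable_norm.aemeasurable

theorem integrable_comp_norm {f : ℝ → G} (hf : Integrable f (radialMeasure (finrank ℝ E))) :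
    Integrable (fun x ↦ f ‖x‖) μ :=
  memLp_one_iff_integrable.1 (memLp_comp_norm μ (memLp_one_iff_integrable.2 hf))

theorem integral_eq_integral_radialMeasure [NormedSpace ℝ G] {f : E → G} (hf : Integrable f μ) :
    ∫ x, f x ∂μ =
      ∫ r, ∫ y : sphere (0 : E) 1, f (r • (y : E)) ∂μ.toSphere ∂radialMeasure (finrank ℝ E) := by
  have hpolar := μ.measurePreserving_homeomorphUnitSphereProd
  have hemb : MeasurableEmbedding (homeomorphUnitSphereProd E) :=
    (homeomorphUnitSphereProd E).measurableEmbedding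
  let fPolar : sphere (0 : E) 1 × Ioi (0 : ℝ) → G := fun z ↦ f (z.2.1 • z.1.1)
  have hfPolar : fPolar ∘ homeomorphUnitSphereProd E = f ∘ (↑) := by
    ext x
    exact congrArg (f ∘ (↑)) ((homeomorphUnitSphereProd E).symm_apply_apply x)
  have hint : Integrable fPolar (μ.toSphere.prod (.volumeIoiPow (finrank ℝ E - 1))) := by
    rw [← hpolar.integrable_comp_emb hemb, hfPolar]
    exact (integrableOn_iff_comap_subtypeVal (measurableSet_singleton _).compl).1 hf.integrableOn
  calc ∫ x, f x ∂μ
      = ∫ x : ({0}ᶜ : Set E), f x ∂(μ.comap (↑)) := by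
        rw [integral_subtype_comap (measurableSet_singleton _).compl f, restrict_compl_singleton]
    _ = ∫ z, fPolar z ∂μ.toSphere.prod (.volumeIoiPow (finrank ℝ E - 1)) := by
        rw [← hpolar.integral_comp hemb]
        exact congrArg (integral _) hfPolar.symm
    _ = ∫ r : Ioi (0 : ℝ), ∫ y : sphere (0 : E) 1, f (r.1 • (y : E)) ∂μ.toSphere
          ∂.volumeIoiPow (finrank ℝ E - 1) := integral_prod_symm _ hint
    _ = _ := by
        rw [← map_val_volumeIoiPow,
          (MeasurableEmbedding.subtype_coe measurableSet_Ioi).integral_map]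

end Polar

section RadialFourier

open Metric Set Module
open scoped FourierTransform

variable {V H : Type*} [NormedAddCommGroup V] [InnerProductSpace ℝ V] [FiniteDimensional ℝ V]
  [MeasurableSpace V] [BorelSpace V] [NormedAddCommGroup H] [InnerProductSpace ℂ H]

/-- The kernel `𝒥`: the Fourier transform, with phase `exp (-i ⟪y, η⟫)` and no factor `2π`, of the
surface measure of the unit sphere, at `η = s • e`. -/
noncomputable def sphereFourier (e : V) (s : ℝ) : ℂ :=
  ∫ y : sphere (0 : V) 1, Complex.exp (-Complex.I * (s * ⟪(y : V), e⟫))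
    ∂(volume : Measure V).toSphere

/-- The radial Fourier transform `ρ ↦ ∫ 𝒥(r ρ) f(r) r ^ (n - 1) dr` of the radial profile `f`, along
the direction `e`. -/
noncomputable def radialFourier (e : V) (f : ℝ → H) (ρ : ℝ) : H :=
  ∫ r, sphereFourier e (r * ρ) • f r ∂radialMeasure (finrank ℝ V)

theorem radialFourier_indicator (e : V) {S : Set ℝ} (hS : MeasurableSet S) (hS0 : S ⊆ Ioi 0)
    (f : ℝ → H) (ρ : ℝ) :
    radialFourier e (S.indicator f) ρ =
      ∫ r in S, r ^ (finrank ℝ V - 1) • sphereFourier e (r * ρ) • f r := by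
  rw [← setIntegral_radialMeasure hS hS0, ← integral_indicator hS]
  simp only [radialFourier, indicator_smul_apply]

variable [Nontrivial V]

theorem fourier_comp_norm_eq_radialFourier [CompleteSpace H] {f : ℝ → H}
    (hf : Integrable f (radialMeasure (finrank ℝ V))) (e : V) (ρ : ℝ) :
    𝓕 (fun x : V ↦ f ‖x‖) (((2 * Real.pi)⁻¹ * ρ) • e) = radialFourier e f ρ := by
  have hfV : Integrable fun x : V ↦ f ‖x‖ := integrable_comp_norm volume hf
  have hint := (Real.fourierIntegral_convergent_iff (((2 * Real.pi)⁻¹ * ρ) • e)).2 hfV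
  simp only [Circle.smul_def, Real.fourierChar_apply] at hint
  rw [Real.fourier_eq]
  simp only [Circle.smul_def, Real.fourierChar_apply]
  rw [integral_eq_integral_radialMeasure volume hint]
  refine integral_congr_ae ?_
  filter_upwards [ae_radialMeasure_pos (finrank ℝ V)] with r hr
  rw [sphereFourier, ← integral_smul_const]
  congr with y
  have hnorm : ‖r • (y : V)‖ = r := by
    rw [norm_smul, norm_eq_of_mem_sphere, mul_one, Real.norm_of_nonneg hr.le]
  rw [hnorm, real_inner_smul_left, real_inner_smul_right]
  congr 2
  push_cast
  field_simp

theorem lintegral_enorm_radialFourier_sq [CompleteSpace H] {e : V} (he : ‖e‖ = 1) {f : ℝ → H}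
    (hf : Integrable f (radialMeasure (finrank ℝ V)))
    (hf2 : MemLp f 2 (radialMeasure (finrank ℝ V))) :
    ∫⁻ ρ, ‖radialFourier e f ρ‖ₑ ^ 2 ∂radialMeasure (finrank ℝ V) =
      ENNReal.ofReal ((2 * Real.pi) ^ finrank ℝ V) *
        ∫⁻ r, ‖f r‖ₑ ^ 2 ∂radialMeasure (finrank ℝ V) := by
  have hfV : Integrable fun x : V ↦ f ‖x‖ := integrable_comp_norm volume hf
  have hcont : Continuous (𝓕 fun x : V ↦ f ‖x‖) := continuous_fourier_of_integrable hfV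
  have hradial (ξ : V) : radialFourier e f ‖ξ‖ =
      𝓕 (fun x : V ↦ f ‖x‖) ((2 * Real.pi)⁻¹ • ξ) := by
    rw [← fourier_comp_norm_eq_radialFourier hf]
    exact fourier_comp_norm_eq_of_norm_eq f (by simp [norm_smul, he])
  have hmeas : Continuous (radialFourier e f) := by
    simp only [← funext (fourier_comp_norm_eq_radialFourier hf e)]
    exact hcont.comp (by fun_prop)
  have hplancherel : ∫⁻ ξ : V, ‖radialFourier e f ‖ξ‖‖ₑ ^ 2 =
      ENNReal.ofReal ((2 * Real.pi) ^ finrank ℝ V) * ∫⁻ x : V, ‖f ‖x‖‖ₑ ^ 2 := by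
    simp only [hradial]
    rw [lintegral_comp_inv_smul volume Real.two_pi_pos (hcont.enorm.measurable.pow_const 2),
      lintegral_enorm_fourier_sq hfV (memLp_comp_norm volume hf2)]
  rw [lintegral_comp_norm volume (f := fun r ↦ ‖radialFourier e f r‖ₑ ^ 2) (by fun_prop),
    lintegral_comp_norm volume (f := fun r ↦ ‖f r‖ₑ ^ 2) (hf2.1.enorm.pow_const 2),
    mul_left_comm] at hplancherel
  have hsphere : (volume : Measure V).toSphere univ ≠ 0 :=
    Measure.measure_univ_ne_zero.2 (volume : Measure V).toSphere_ne_zero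
  exact (ENNReal.mul_right_inj hsphere (measure_ne_top _ _)).1 hplancherel

theorem lintegral_enorm_radialFourier_indicator_sq_le [CompleteSpace H] {e : V} (he : ‖e‖ = 1)
    {S : Set ℝ} (hS : MeasurableSet S) (hSfin : radialMeasure (finrank ℝ V) S ≠ ∞) {F : ℝ → H}
    (hF : AEStronglyMeasurable F ((radialMeasure (finrank ℝ V)).restrict S)) :
    ∫⁻ ρ, ‖radialFourier e (S.indicator F) ρ‖ₑ ^ 2 ∂radialMeasure (finrank ℝ V) ≤
      ENNReal.ofReal ((2 * Real.pi) ^ finrank ℝ V) *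
        ∫⁻ r in S, ‖F r‖ₑ ^ 2 ∂radialMeasure (finrank ℝ V) := by
  by_cases htop : ∫⁻ r in S, ‖F r‖ₑ ^ 2 ∂radialMeasure (finrank ℝ V) = ∞
  · rw [htop, mul_top (by simpa using by positivity)]
    exact le_top
  have : IsFiniteMeasure ((radialMeasure (finrank ℝ V)).restrict S) :=
    isFiniteMeasure_restrict.2 hSfin
  have hF2 : MemLp F 2 ((radialMeasure (finrank ℝ V)).restrict S) := by
    refine ⟨hF, (pow_lt_top_iff.1 ?_).resolve_right two_ne_zero⟩
    rw [eLpNorm_two_sq_eq_lintegral]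
    exact lt_top_iff_ne_top.2 htop
  rw [lintegral_enorm_radialFourier_sq he
    ((integrable_indicator_iff hS).2 (hF2.integrable one_le_two))
    ((memLp_indicator_iff_restrict hS).2 hF2), ← eLpNorm_two_sq_eq_lintegral,
    ← eLpNorm_two_sq_eq_lintegral, eLpNorm_indicator_eq_eLpNorm_restrict hS]

end RadialFourier

section Weight

variable {E : Type*} [SeminormedAddCommGroup E]

theorem norm_le_max_mul_rpow {u : ℝ → E} {A C a b c : ℝ}
    (hu0 : ∀ ρ, 0 < ρ → ρ ≤ 1 → ‖u ρ‖ ≤ A * ρ ^ a) (hu1 : ∀ ρ, 1 ≤ ρ → ‖u ρ‖ ≤ C * ρ ^ c)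
    (hba : b ≤ a) (hcb : c ≤ b) {ρ : ℝ} (hρ : 0 < ρ) : ‖u ρ‖ ≤ max A C * ρ ^ b := by
  rcases le_total ρ 1 with h | h
  · have hA : 0 ≤ A :=
      nonneg_of_mul_nonneg_left ((norm_nonneg _).trans (hu0 ρ hρ h)) (by positivity)
    calc ‖u ρ‖ ≤ A * ρ ^ a := hu0 ρ hρ h
      _ ≤ max A C * ρ ^ b :=
        mul_le_mul (le_max_left _ _) (Real.rpow_le_rpow_of_exponent_ge hρ h hba) (by positivity)
          (le_max_of_le_left hA)
  · have hC : 0 ≤ C := nonneg_of_mul_nonneg_left ((norm_nonneg _).trans (hu1 ρ h)) (by positivity)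
    calc ‖u ρ‖ ≤ C * ρ ^ c := hu1 ρ h
      _ ≤ max A C * ρ ^ b :=
        mul_le_mul (le_max_right _ _) (Real.rpow_le_rpow_of_exponent_le h hcb) (by positivity)
          (le_max_of_le_right hC)

theorem enorm_sq_mul_ofReal_rpow_le {v : E} {K a ρ : ℝ} (m : ℕ) (hρ : 0 < ρ)
    (hv : ‖v‖ ≤ K * ρ ^ a) :
    ‖v‖ₑ ^ 2 * ENNReal.ofReal (ρ ^ (m - 2 * a)) ≤
      ENNReal.ofReal (K ^ 2) * ENNReal.ofReal (ρ ^ m) := by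
  rw [← ofReal_norm, ← ofReal_pow (norm_nonneg _), ← ofReal_mul (by positivity),
    ← ofReal_mul (by positivity)]
  refine ofReal_le_ofReal ?_
  calc ‖v‖ ^ 2 * ρ ^ (m - 2 * a) ≤ (K * ρ ^ a) ^ 2 * ρ ^ (m - 2 * a) := by gcongr
    _ = K ^ 2 * (ρ ^ (a * 2) * ρ ^ (m - 2 * a)) := by
      rw [mul_pow, Real.rpow_mul hρ.le, Real.rpow_ofNat, mul_assoc]
    _ = K ^ 2 * ρ ^ m := by
      rw [← Real.rpow_add hρ, mul_comm a 2, add_sub_cancel, Real.rpow_natCast]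

end Weight

section WeightedEstimate

open Metric Set Module

variable {V H E : Type*} [NormedAddCommGroup V] [InnerProductSpace ℝ V] [FiniteDimensional ℝ V]
  [MeasurableSpace V] [BorelSpace V] [Nontrivial V] [NormedAddCommGroup H] [InnerProductSpace ℂ H]
  [CompleteSpace H] [SeminormedAddCommGroup E]

theorem setLIntegral_enorm_sq_mul_radialFourier_indicator_sq_le {e : V} (he : ‖e‖ = 1) {u : ℝ → E}
    {K a : ℝ} (hu : ∀ ρ, 0 < ρ → ‖u ρ‖ ≤ K * ρ ^ a) {S : Set ℝ} (hS : MeasurableSet S)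
    (hSfin : radialMeasure (finrank ℝ V) S ≠ ∞) {F : ℝ → H}
    (hF : AEStronglyMeasurable F ((radialMeasure (finrank ℝ V)).restrict S)) :
    ∫⁻ ρ in Ioi 0, ‖u ρ‖ₑ ^ 2 * ENNReal.ofReal (ρ ^ ((finrank ℝ V - 1 : ℕ) - 2 * a)) *
        ‖radialFourier e (S.indicator F) ρ‖ₑ ^ 2 ≤
      ENNReal.ofReal (K ^ 2 * (2 * Real.pi) ^ finrank ℝ V) *
        ∫⁻ r in S, ‖F r‖ₑ ^ 2 ∂radialMeasure (finrank ℝ V) := by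
  calc _ ≤ ∫⁻ ρ in Ioi 0, ENNReal.ofReal (K ^ 2) *
        (‖radialFourier e (S.indicator F) ρ‖ₑ ^ 2 * ENNReal.ofReal (ρ ^ (finrank ℝ V - 1))) := by
        refine setLIntegral_mono' measurableSet_Ioi fun ρ hρ ↦ ?_
        rw [mul_comm (‖radialFourier e (S.indicator F) ρ‖ₑ ^ 2), ← mul_assoc]
        exact mul_le_mul_left (enorm_sq_mul_ofReal_rpow_le _ hρ (hu ρ hρ)) _
    _ = ENNReal.ofReal (K ^ 2) *
        ∫⁻ ρ, ‖radialFourier e (S.indicator F) ρ‖ₑ ^ 2 ∂radialMeasure (finrank ℝ V) := by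
        rw [lintegral_const_mul' _ _ ofReal_ne_top, ← lintegral_radialMeasure]
    _ ≤ _ := by
        rw [ofReal_mul (sq_nonneg K), mul_assoc]
        gcongr
        exact lintegral_enorm_radialFourier_indicator_sq_le he hS hSfin hF

theorem statement11_general {e : V} (he : ‖e‖ = 1) {u : ℝ → E} {m : ℕ} (hm : finrank ℝ V ≤ m)
    (hu0 : ∀ ρ, 0 < ρ → ρ ≤ 1 → ‖u ρ‖ ≤ ρ ^ m) {M : ℝ} (hu1 : ∀ ρ, 1 ≤ ρ → ‖u ρ‖ ≤ M)
    {p : ℝ} (hp : 1 ≤ p) :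
    ∃ C : ℝ, 0 < C ∧ ∀ S, MeasurableSet S → S ⊆ Ioi 0 → radialMeasure (finrank ℝ V) S ≠ ∞ →
      ∀ F : ℝ → H, AEStronglyMeasurable F (volume.restrict S) →
        ∫⁻ ρ in Ioi 0, ‖u ρ‖ₑ ^ 2 *
            ENNReal.ofReal (ρ ^ (2 * finrank ℝ V / p - finrank ℝ V - 1)) *
            ‖∫ r in S, r ^ (finrank ℝ V - 1) • sphereFourier e (r * ρ) • F r‖ₑ ^ 2 ≤
          ENNReal.ofReal C *
            ∫⁻ r in S, ‖F r‖ₑ ^ 2 * ENNReal.ofReal (r ^ (finrank ℝ V - 1)) := by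
  set n := finrank ℝ V with hn
  have hnp : n / p ≤ n := div_le_self (by positivity) hp
  have hnm : n - n / p ≤ (m : ℝ) :=
    (sub_le_self _ (by positivity)).trans (by exact_mod_cast hm)
  have hu (ρ : ℝ) (hρ : 0 < ρ) : ‖u ρ‖ ≤ max 1 M * ρ ^ (n - n / p) :=
    norm_le_max_mul_rpow (a := m) (c := 0) (by simpa using hu0) (by simpa using hu1) hnm
      (sub_nonneg.2 hnp) hρ
  have hexp : 2 * n / p - n - 1 = (n - 1 : ℕ) - 2 * (n - n / p) := by
    rw [Nat.cast_pred (hn ▸ finrank_pos)]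
    ring
  refine ⟨max 1 M ^ 2 * (2 * Real.pi) ^ n, by positivity, fun S hS hS0 hSfin F hF ↦ ?_⟩
  have hFradial : AEStronglyMeasurable F ((radialMeasure n).restrict S) := by
    rw [restrict_radialMeasure hS hS0]
    exact hF.mono_ac (withDensity_absolutelyContinuous _ _)
  simp only [hn, ← radialFourier_indicator e hS hS0, ← setLIntegral_radialMeasure hS hS0]
  rw [← hn, hexp]
  exact setLIntegral_enorm_sq_mul_radialFourier_indicator_sq_le he hu hS hSfin hFradial

end WeightedEstimate

/-- The weighted `L²` estimate for integrals against the Bessel-type kernel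
`𝒥(s) = c(d) s^{-(d-2)/2} J_{(d-2)/2}(s)` (realized as the Fourier transform of the
unit sphere measure in a fixed direction): for `1 ≤ p ≤ 2`,
`∫_0^∞ |u(ρ)|² ρ^{2d/p-d-1} |∫_{2^j}^{2^{j+1}} r^{d-1} 𝒥(rρ) F(r) dr|² dρ
  ≤ C ∫_{2^j}^{2^{j+1}} |F(r)|² r^{d-1} dr`, uniformly in `j` and `F`. -/
theorem statement11 (d : ℕ) (hd : 2 ≤ d) (u : ℝ → ℂ)
    (hu1 : ∀ ρ : ℝ, 0 < ρ → ρ ≤ 1 → ‖u ρ‖ ≤ ρ ^ (10 * d))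
    (hu2 : ∀ N : ℕ, ∃ C_N : ℝ, ∀ ρ : ℝ, 1 ≤ ρ → ‖u ρ‖ ≤ C_N * ρ ^ (-(N : ℝ)))
    (p : ℝ) (hp1 : 1 ≤ p) (hp2 : p ≤ 2)
    (J : ℝ → ℂ)
    (hJ : ∀ s : ℝ, J s =
      ∫ y : Metric.sphere (0 : EuclideanSpace ℝ (Fin d)) 1,
        Complex.exp (-Complex.I *
          (s * ⟪(y : EuclideanSpace ℝ (Fin d)),
            EuclideanSpace.single (⟨0, by omega⟩ : Fin d) (1 : ℝ)⟫))
        ∂(volume : Measure (EuclideanSpace ℝ (Fin d))).toSphere) :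
    ∃ C : ℝ, 0 < C ∧
      ∀ (j : ℕ) (F : ℝ → ℂ), Measurable F →
        (∫⁻ ρ in Set.Ioi (0 : ℝ),
            (‖u ρ‖₊ : ℝ≥0∞) ^ 2 * ENNReal.ofReal (ρ ^ (2 * d / p - d - 1)) *
              (‖∫ r in Set.Icc ((2 : ℝ) ^ j) (2 ^ (j + 1)),
                ((r ^ (d - 1) : ℝ) : ℂ) * J (r * ρ) * F r‖₊ : ℝ≥0∞) ^ 2) ≤
          ENNReal.ofReal C *
            ∫⁻ r in Set.Icc ((2 : ℝ) ^ j) (2 ^ (j + 1)),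
              (‖F r‖₊ : ℝ≥0∞) ^ 2 * ENNReal.ofReal (r ^ (d - 1)) := by
  let e : EuclideanSpace ℝ (Fin d) := EuclideanSpace.single ⟨0, by omega⟩ 1
  have : Nonempty (Fin d) := ⟨0, by omega⟩
  obtain rfl : J = sphereFourier e := funext hJ
  obtain ⟨M, hM⟩ := hu2 0
  obtain ⟨C, hC, h⟩ := statement11_general (H := ℂ) (e := e) (by simp [e])
    (finrank_euclideanSpace_fin.trans_le (by omega)) hu1 (by simpa using hM) hp1
  refine ⟨C, hC, fun j F hF ↦ ?_⟩
  simpa only [finrank_euclideanSpace_fin, enorm_eq_nnnorm, Complex.real_smul, smul_eq_mul,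
    mul_assoc] using h (Set.Icc (2 ^ j) (2 ^ (j + 1))) measurableSet_Icc
      (fun r hr ↦ lt_of_lt_of_le (by positivity) hr.1) isCompact_Icc.measure_ne_top
      F hF.aestronglyMeasurable
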